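/- Let G be a finite abelian group and S a UFIM over G∖{0} with irreducible factorization [ℓ] = I_1 ⊔ ⋯ ⊔ I_m. Then ∏_{i=1}^m |I_i| ≤ |G|; in particular 2^m ≤ |G|, i.e., m ≤ log_2 |G|. -/

import Mathlib

/-!
The complement of a minimal zero-sum subfamily is zero-sum and hence factors too, so uniqueness
makes every minimal zero-sum subfamily a part, and every zero-sum subfamily a union of parts. Hence
the parts are independent: if subfamilies `T I ⊆ I` have sums adding up to zero, then each `T I` has
sum zero.

A difference of two prefix sums over a zero-sum part is again a sum over a subfamily of that part,
possibly after taking a complement. By independence, adding up one prefix sum from each part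
determines all of them. Prefix sums over a minimal zero-sum part are moreover pairwise distinct, so
choosing one element from each part gives `∏ |I|` distinct elements of `G`.
-/

open Finset

/-- `S(I)` is minimal zero-sum: nonempty, zero-sum, and no proper nonempty
subfamily is zero-sum. -/
def IsMinZeroSum {G : Type*} [AddCommGroup G] {ℓ : ℕ} (g : Fin ℓ → G)
    (I : Finset (Fin ℓ)) : Prop :=
  I.Nonempty ∧ ∑ i ∈ I, g i = 0 ∧ ∀ J ⊂ I, J.Nonempty → ∑ i ∈ J, g i ≠ 0

/-- `P` is an irreducible factorization of the indexed multiset `g`: a partition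
of the index set all of whose parts are minimal zero-sum. -/
def IsFactorization {G : Type*} [AddCommGroup G] {ℓ : ℕ} (g : Fin ℓ → G)
    (P : Finpartition (Finset.univ : Finset (Fin ℓ))) : Prop :=
  ∀ I ∈ P.parts, IsMinZeroSum g I

/-- `g` is a unique factorization indexed multiset (UFIM) over `G∖{0}`:
all elements are nonzero and there is exactly one irreducible factorization. -/
def IsUFIM {G : Type*} [AddCommGroup G] {ℓ : ℕ} (g : Fin ℓ → G) : Prop :=
  (∀ i, g i ≠ 0) ∧
  ∃! P : Finpartition (Finset.univ : Finset (Fin ℓ)), IsFactorization g P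

/-- The cross number `k(S) = ∑ 1/ord(g_i)`. -/
noncomputable def crossNum {G : Type*} [AddCommGroup G] {ℓ : ℕ} (g : Fin ℓ → G) : ℝ :=
  ∑ i, (1 : ℝ) / (addOrderOf (g i) : ℝ)

/-- `K₁(G)`: the maximal cross number of a UFIM over `G∖{0}`. -/
noncomputable def K1 (G : Type*) [AddCommGroup G] : ℝ :=
  sSup {x : ℝ | ∃ (ℓ : ℕ) (g : Fin ℓ → G), IsUFIM g ∧ crossNum g = x}

/-- `N₁(G)`: the maximal length of a UFIM over `G∖{0}`. -/
noncomputable def N1 (G : Type*) [AddCommGroup G] : ℕ :=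
  sSup {n : ℕ | ∃ g : Fin n → G, IsUFIM g}

/-- `K(G)`: the maximal cross number of a minimal zero-sum indexed multiset over `G∖{0}`. -/
noncomputable def Kcross (G : Type*) [AddCommGroup G] : ℝ :=
  sSup {x : ℝ | ∃ (ℓ : ℕ) (g : Fin ℓ → G), (∀ i, g i ≠ 0) ∧
    IsMinZeroSum g Finset.univ ∧ crossNum g = x}

/-- `g` is zero-sum free: no nonempty subfamily is zero-sum. -/
def IsZeroSumFree {G : Type*} [AddCommGroup G] {ℓ : ℕ} (g : Fin ℓ → G) : Prop :=
  ∀ I : Finset (Fin ℓ), I.Nonempty → ∑ i ∈ I, g i ≠ 0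

/-- The little cross number `k(G)`: the maximal cross number of a zero-sum free
indexed multiset over `G∖{0}`. -/
noncomputable def littleCross (G : Type*) [AddCommGroup G] : ℝ :=
  sSup {x : ℝ | ∃ (ℓ : ℕ) (g : Fin ℓ → G), (∀ i, g i ≠ 0) ∧
    IsZeroSumFree g ∧ crossNum g = x}

section Sums

variable {ι M G : Type*}

lemma one_lt_card_of_sum_eq_zero [AddCommMonoid M] {f : ι → M} {s : Finset ι} (hs : s.Nonempty)
    (h0 : ∑ i ∈ s, f i = 0) (hf : ∀ i ∈ s, f i ≠ 0) : 1 < #s := by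
  obtain ⟨a, rfl⟩ | h := hs.exists_eq_singleton_or_nontrivial
  · exact absurd (by simpa only [sum_singleton] using h0) (hf a (mem_singleton_self a))
  · exact one_lt_card_iff_nontrivial.mpr h

lemma sum_eq_zero_of_forall_sum_part_eq_zero [DecidableEq ι] [AddCommMonoid M] {f : ι → M}
    {s : Finset ι} (Q : Finpartition s) (h : ∀ I ∈ Q.parts, ∑ i ∈ I, f i = 0) :
    ∑ i ∈ s, f i = 0 := by
  rw [← Q.biUnion_parts, sum_biUnion Q.disjoint]
  exact sum_eq_zero h

lemma exists_subset_sum_eq_sum_sub_sum [AddCommGroup G] {f : ι → G} {s A B : Finset ι}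
    (hs : ∑ i ∈ s, f i = 0) (hA : A ⊆ s) (hB : B ⊆ s) (hAB : A ⊆ B ∨ B ⊆ A) :
    ∃ T ⊆ s, ∑ i ∈ T, f i = ∑ i ∈ A, f i - ∑ i ∈ B, f i := by
  classical
  obtain h | h := hAB
  · refine ⟨s \ (B \ A), sdiff_subset, ?_⟩
    rw [sum_sdiff_eq_sub (sdiff_subset.trans hB), sum_sdiff_eq_sub h, hs, zero_sub, neg_sub]
  · exact ⟨A \ B, sdiff_subset.trans hA, sum_sdiff_eq_sub h⟩

end Sums

section PrefixSum

variable {ι M G : Type*} [LinearOrder ι]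

/-- The sum of the family `f` over the elements of `s` strictly below `x`; for `x ∈ s` the prefix
is a proper subset of `s`, possibly empty. -/
def prefixSum [AddCommMonoid M] (f : ι → M) (s : Finset ι) (x : ι) : M :=
  ∑ i ∈ s with i < x, f i

lemma exists_subset_sum_eq_prefixSum_sub_prefixSum [AddCommGroup G] {f : ι → G} {s : Finset ι}
    (hs : ∑ i ∈ s, f i = 0) (x y : ι) :
    ∃ T ⊆ s, ∑ i ∈ T, f i = prefixSum f s x - prefixSum f s y := by
  refine exists_subset_sum_eq_sum_sub_sum hs (filter_subset _ _) (filter_subset _ _) ?_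
  exact (le_total x y).imp (fun h => monotone_filter_right s fun i _ hi => hi.trans_le h)
    fun h => monotone_filter_right s fun i _ hi => hi.trans_le h

end PrefixSum

section ZeroSum

variable {G : Type*} [AddCommGroup G] {ℓ : ℕ} {g : Fin ℓ → G}

lemma exists_isMinZeroSum_subset {T : Finset (Fin ℓ)} (hT : T.Nonempty)
    (h0 : ∑ i ∈ T, g i = 0) : ∃ J ⊆ T, IsMinZeroSum g J := by
  obtain ⟨J, hJT, hJ⟩ := exists_minimal_le_of_wellFoundedLT
    (fun J : Finset (Fin ℓ) => J.Nonempty ∧ ∑ i ∈ J, g i = 0) T ⟨hT, h0⟩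
  exact ⟨J, hJT, hJ.prop.1, hJ.prop.2, fun K hKJ hK hK0 => hJ.not_prop_of_lt hKJ ⟨hK, hK0⟩⟩

lemma exists_finpartition_isMinZeroSum {T : Finset (Fin ℓ)} (h0 : ∑ i ∈ T, g i = 0) :
    ∃ Q : Finpartition T, ∀ I ∈ Q.parts, IsMinZeroSum g I := by
  induction T using Finset.strongInduction with
  | H T ih =>
    obtain rfl | hT := T.eq_empty_or_nonempty
    · exact ⟨Finpartition.empty _, fun I hI => absurd hI (notMem_empty I)⟩
    · obtain ⟨J, hJT, hJ⟩ := exists_isMinZeroSum_subset hT h0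
      have hrest : ∑ i ∈ T \ J, g i = 0 := by rw [sum_sdiff_eq_sub hJT, h0, hJ.2.1, sub_zero]
      obtain ⟨Q, hQ⟩ := ih (T \ J) (sdiff_ssubset hJT hJ.1) hrest
      exact ⟨Q.extend hJ.1.ne_empty sdiff_disjoint (sdiff_union_of_subset hJT),
        forall_mem_insert _ _ _ |>.mpr ⟨hJ, hQ⟩⟩

lemma IsMinZeroSum.sum_ne_sum_of_ssubset {I A B : Finset (Fin ℓ)} (hI : IsMinZeroSum g I)
    (hAB : A ⊂ B) (hBI : B ⊂ I) : ∑ i ∈ A, g i ≠ ∑ i ∈ B, g i := by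
  intro h
  refine hI.2.2 (B \ A) (sdiff_subset.trans_ssubset hBI) (sdiff_nonempty.mpr hAB.not_subset) ?_
  rw [sum_sdiff_eq_sub hAB.subset, h, sub_self]

lemma IsMinZeroSum.prefixSum_ne_of_lt {I : Finset (Fin ℓ)} (hI : IsMinZeroSum g I)
    {x y : Fin ℓ} (hx : x ∈ I) (hy : y ∈ I) (hxy : x < y) :
    prefixSum g I x ≠ prefixSum g I y := by
  refine hI.sum_ne_sum_of_ssubset ?_ (filter_ssubset.mpr ⟨y, hy, lt_irrefl y⟩)
  refine ssubset_iff_of_subset (monotone_filter_right I fun i _ hi => hi.trans hxy) |>.mpr ?_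
  exact ⟨x, mem_filter.mpr ⟨hx, hxy⟩, fun h => lt_irrefl x (mem_filter.mp h).2⟩

lemma IsMinZeroSum.injOn_prefixSum {I : Finset (Fin ℓ)} (hI : IsMinZeroSum g I) :
    Set.InjOn (prefixSum g I) I := by
  intro x hx y hy hxy
  by_contra hne
  obtain h | h := lt_or_gt_of_ne hne
  · exact hI.prefixSum_ne_of_lt hx hy h hxy
  · exact hI.prefixSum_ne_of_lt hy hx h hxy.symm

end ZeroSum

namespace IsFactorization

variable {G : Type*} [AddCommGroup G] {ℓ : ℕ} {g : Fin ℓ → G}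
  {P : Finpartition (Finset.univ : Finset (Fin ℓ))}

lemma mem_parts_of_isMinZeroSum (hP : IsFactorization g P) (hU : ∃! Q, IsFactorization g Q)
    {J : Finset (Fin ℓ)} (hJ : IsMinZeroSum g J) : J ∈ P.parts := by
  have huniv : ∑ i, g i = 0 := sum_eq_zero_of_forall_sum_part_eq_zero P fun I hI => (hP I hI).2.1
  have hcompl : ∑ i ∈ Jᶜ, g i = 0 := by
    rw [compl_eq_univ_sdiff, sum_sdiff_eq_sub (subset_univ J), huniv, hJ.2.1, sub_zero]
  obtain ⟨Q, hQ⟩ := exists_finpartition_isMinZeroSum hcompl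
  let R := Q.extend hJ.1.ne_empty disjoint_compl_left (sup_comm _ _ |>.trans (union_compl J))
  have hR : IsFactorization g R := forall_mem_insert _ _ _ |>.mpr ⟨hJ, hQ⟩
  exact hU.unique hR hP ▸ mem_insert_self J Q.parts

lemma sum_inter_eq_zero (hP : IsFactorization g P) (hU : ∃! Q, IsFactorization g Q)
    {T I : Finset (Fin ℓ)} (h0 : ∑ i ∈ T, g i = 0) (hI : I ∈ P.parts) :
    ∑ i ∈ T ∩ I, g i = 0 := by
  obtain ⟨Q, hQ⟩ := exists_finpartition_isMinZeroSum h0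
  by_cases hIQ : I ∈ Q.parts
  · rw [inter_eq_right.mpr (Q.le hIQ), (hP I hI).2.1]
  · have hdisj : Disjoint T I := by
      rw [← Q.biUnion_parts, disjoint_biUnion_left]
      exact fun J hJ => P.disjoint (hP.mem_parts_of_isMinZeroSum hU (hQ J hJ)) hI
        (ne_of_mem_of_not_mem hJ hIQ)
    rw [disjoint_iff_inter_eq_empty.mp hdisj, sum_empty]

lemma sum_eq_zero_of_sum_sum_eq_zero (hP : IsFactorization g P)
    (hU : ∃! Q, IsFactorization g Q) {T : P.parts → Finset (Fin ℓ)} (hT : ∀ I, T I ⊆ I)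
    (h0 : ∑ I, ∑ i ∈ T I, g i = 0) (I : P.parts) : ∑ i ∈ T I, g i = 0 := by
  have hdisj {J K : P.parts} (hJK : J ≠ K) : Disjoint (J : Finset (Fin ℓ)) K :=
    P.disjoint J.2 K.2 (Subtype.coe_injective.ne hJK)
  have hunion : ∑ i ∈ univ.biUnion T, g i = 0 := by
    rwa [sum_biUnion fun J _ K _ hJK => (hdisj hJK).mono (hT J) (hT K)]
  have hinter : univ.biUnion T ∩ I = T I := by
    refine Subset.antisymm (fun i hi => ?_)
      (subset_inter (subset_biUnion_of_mem T (mem_univ I)) (hT I))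
    obtain ⟨hiT, hiI⟩ := mem_inter.mp hi
    obtain ⟨J, -, hiJ⟩ := mem_biUnion.mp hiT
    obtain rfl : J = I := by
      by_contra hJI
      exact disjoint_left.mp (hdisj hJI) (hT J hiJ) hiI
    exact hiJ
  exact hinter ▸ hP.sum_inter_eq_zero hU hunion I.2

lemma injective_sum_prefixSum (hP : IsFactorization g P) (hU : ∃! Q, IsFactorization g Q) :
    Function.Injective fun x : (I : P.parts) → (I : Finset (Fin ℓ)) =>
      ∑ I : P.parts, prefixSum g I (x I) := by
  intro x y hxy
  choose T hT hTsum using fun I : P.parts =>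
    exists_subset_sum_eq_prefixSum_sub_prefixSum (hP I I.2).2.1 (x I : Fin ℓ) (y I)
  have h0 : ∑ I, ∑ i ∈ T I, g i = 0 := by
    simp only [hTsum, sum_sub_distrib]
    exact sub_eq_zero.mpr hxy
  funext I
  refine Subtype.ext ((hP I I.2).injOn_prefixSum (x I).2 (y I).2 ?_)
  rw [← sub_eq_zero, ← hTsum I]
  exact hP.sum_eq_zero_of_sum_sum_eq_zero hU hT h0 I

lemma prod_card_parts_le [Fintype G] (hP : IsFactorization g P)
    (hU : ∃! Q, IsFactorization g Q) : ∏ I ∈ P.parts, #I ≤ Fintype.card G := by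
  calc ∏ I ∈ P.parts, #I = Fintype.card ((I : P.parts) → (I : Finset (Fin ℓ))) := by
        simp only [Fintype.card_pi, Fintype.card_coe, prod_coe_sort P.parts card]
    _ ≤ Fintype.card G := Fintype.card_le_of_injective _ (hP.injective_sum_prefixSum hU)

lemma two_pow_card_parts_le_prod (hP : IsFactorization g P) (hg : ∀ i, g i ≠ 0) :
    2 ^ #P.parts ≤ ∏ I ∈ P.parts, #I :=
  pow_card_le_prod _ _ _ fun I hI =>
    one_lt_card_of_sum_eq_zero (hP I hI).1 (hP I hI).2.1 fun i _ => hg i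

end IsFactorization

/-- Proposition: if `S` is a UFIM over `G∖{0}` with irreducible factorization
`I_1 ⊔ ⋯ ⊔ I_m`, then `∏ |I_i| ≤ |G|`; in particular `2^m ≤ |G|`, i.e.
`m ≤ log₂ |G|`. -/
theorem factorization_prod_card_le {G : Type*} [AddCommGroup G] [Fintype G]
    {ℓ : ℕ} (g : Fin ℓ → G) (hg : IsUFIM g)
    (P : Finpartition (Finset.univ : Finset (Fin ℓ))) (hP : IsFactorization g P) :
    (∏ I ∈ P.parts, I.card) ≤ Fintype.card G ∧
    2 ^ P.parts.card ≤ Fintype.card G ∧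
    (P.parts.card : ℝ) ≤ Real.logb 2 (Fintype.card G) := by
  have hprod := hP.prod_card_parts_le hg.2
  have hpow : 2 ^ #P.parts ≤ Fintype.card G := (hP.two_pow_card_parts_le_prod hg.1).trans hprod
  refine ⟨hprod, hpow, ?_⟩
  rw [Real.le_logb_iff_rpow_le one_lt_two (mod_cast Fintype.card_pos), Real.rpow_natCast]
  exact_mod_cast hpow
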